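/- arXiv:2303.03182 — 4 statements merged into one kernel-verified Lean document; each statement's English description precedes it below -/
import Mathlib

section
/- Suppose there are two active users requesting distinct files: A = {u₁, u₂} with d_{u₁} = n₁ ≠ n₂ = d_{u₂}, where q_{n₁}, q_{n₂} ∈ [0,1] and F_{n₁}, F_{n₂} ≥ 0, and the leader group is U = {u₁, u₂}. Then R_MCCS(d; q) = (1 − q_{n₁})² F_{n₁} + (1 − q_{n₂})² F_{n₂} + max{ q_{n₁}(1 − q_{n₁}) F_{n₁}, q_{n₂}(1 − q_{n₂}) F_{n₂} }, and this quantity equals R_lb({n₁, n₂}; q). -/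
/-!
Since `∑ₛ C(|A| - i, s) qˢ (1 - q)^(|A| - i - s) = 1`, a file placed at position `i` by `π`
contributes `(1 - q)ⁱ F` to the lower bound. For two files the bound is thus the larger of
`(1 - q₁) F₁ + (1 - q₂)² F₂` and `(1 - q₂) F₂ + (1 - q₁)² F₁`. Splitting
`(1 - q) F = (1 - q)² F + q (1 - q) F` separates off the common part `(1 - q₁)² F₁ + (1 - q₂)² F₂`,
which is what the D-MCCS spends on the two singleton groups; the group of both users costs the
remaining maximum.
-/

open Finset

/-- Maximum of a real-valued function over a finite set (`0` if the set is empty). -/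
noncomputable def maxOver {α : Type*} (S : Finset α) (f : α → ℝ) : ℝ :=
  if h : S.Nonempty then S.sup' h f else 0

/-- The D-MCCS delivery rate: the sum, over nonempty subsets `S ⊆ A` with
`S ∩ U ≠ ∅` (the non-redundant groups), of
`max_{k ∈ S} q_{d_k}^{|S|−1} (1 − q_{d_k})^{|A|−|S|+1} F_{d_k}`. -/
noncomputable def R_MCCS {α : Type*} [DecidableEq α] {N : ℕ} (A U : Finset α)
    (d : α → Fin N) (q F : Fin N → ℝ) : ℝ :=
  ∑ S ∈ A.powerset.filter (fun S => (S ∩ U).Nonempty),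
    maxOver S (fun k =>
      q (d k) ^ (S.card - 1) * (1 - q (d k)) ^ (A.card - S.card + 1) * F (d k))

/-- The lower-bound rate: the maximum over bijections `π : {1,…,|D|} → D` of
`Σ_{s=0}^{|A|−1} Σ_{i=1}^{|D|} C(|A|−i, s) q_{π(i)}^s (1 − q_{π(i)})^{|A|−s} F_{π(i)}`,
where `Acard = |A|`. -/
noncomputable def R_lb {N : ℕ} (Acard : ℕ) (D : Finset (Fin N))
    (q F : Fin N → ℝ) : ℝ :=
  ⨆ π : Fin D.card ≃ {x : Fin N // x ∈ D},
    ∑ s ∈ Finset.range Acard, ∑ i : Fin D.card,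
      ((Acard - (i.1 + 1)).choose s : ℝ) * q (π i).1 ^ s *
        (1 - q (π i).1) ^ (Acard - s) * F (π i).1

/-- `U` is a leader group for active set `A` with demand map `d`: `U ⊆ A`, the demand
map is injective on `U`, and the users in `U` request exactly the distinct files
requested by the users in `A`. -/
def IsLeaderGroup {α : Type*} [DecidableEq α] {N : ℕ} (A U : Finset α)
    (d : α → Fin N) : Prop :=
  U ⊆ A ∧ Set.InjOn d ↑U ∧ U.image d = A.image d

section Delivery

variable {α : Type*}

theorem maxOver_empty (f : α → ℝ) : maxOver ∅ f = 0 := by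
  simp [maxOver]

theorem maxOver_singleton (a : α) (f : α → ℝ) : maxOver {a} f = f a := by
  simp [maxOver]

variable [DecidableEq α]

theorem maxOver_insert {S : Finset α} (hS : S.Nonempty) (a : α) (f : α → ℝ) :
    maxOver (insert a S) f = max (f a) (maxOver S f) := by
  rw [maxOver, dif_pos (insert_nonempty a S), maxOver, dif_pos hS, sup'_insert hS]

theorem maxOver_pair (a b : α) (f : α → ℝ) : maxOver {a, b} f = max (f a) (f b) := by
  rw [maxOver_insert (singleton_nonempty b), maxOver_singleton]

variable {N : ℕ}

theorem R_MCCS_eq_sum_powerset {A U : Finset α} (hAU : A ⊆ U) (d : α → Fin N)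
    (q F : Fin N → ℝ) :
    R_MCCS A U d q F = ∑ S ∈ A.powerset, maxOver S (fun k =>
      q (d k) ^ (#S - 1) * (1 - q (d k)) ^ (#A - #S + 1) * F (d k)) := by
  refine sum_filter_of_ne fun S hS hne => ?_
  rw [inter_eq_left.mpr ((mem_powerset.mp hS).trans hAU), nonempty_iff_ne_empty]
  rintro rfl
  exact hne (maxOver_empty _)

theorem R_MCCS_pair {u₁ u₂ : α} (hu : u₁ ≠ u₂) (d : α → Fin N) (q F : Fin N → ℝ) :
    R_MCCS {u₁, u₂} {u₁, u₂} d q F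
      = (1 - q (d u₁)) ^ 2 * F (d u₁) + (1 - q (d u₂)) ^ 2 * F (d u₂)
        + max (q (d u₁) * (1 - q (d u₁)) * F (d u₁)) (q (d u₂) * (1 - q (d u₂)) * F (d u₂)) := by
  have hpowerset : ({u₂} : Finset α).powerset = {∅, {u₂}} := rfl
  rw [R_MCCS_eq_sum_powerset Subset.rfl, sum_powerset_insert (notMem_singleton.mpr hu),
    hpowerset, sum_pair (singleton_ne_empty u₂).symm, sum_pair (singleton_ne_empty u₂).symm,
    insert_empty_eq]
  simp only [maxOver_empty, maxOver_singleton, maxOver_pair, card_singleton, card_pair hu,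
    tsub_self, Nat.reduceSub, Nat.reduceAdd, pow_zero, pow_one, one_mul, zero_add]
  ring

end Delivery

theorem sum_range_choose_sub_mul_pow_mul_pow {R : Type*} [CommSemiring R] (x y : R) {m j : ℕ}
    (hj : 0 < j) (hjm : j ≤ m) :
    ∑ s ∈ range m, ((m - j).choose s : R) * x ^ s * y ^ (m - s) = y ^ j * (x + y) ^ (m - j) := by
  have hsub : range (m - j + 1) ⊆ range m := range_subset_range.mpr (by lia)
  have htail : ∀ s ∈ range m, s ∉ range (m - j + 1) →
      ((m - j).choose s : R) * x ^ s * y ^ (m - s) = 0 := fun s _ hs => by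
    rw [Nat.choose_eq_zero_of_lt (by simpa using hs), Nat.cast_zero, zero_mul, zero_mul]
  rw [← sum_subset hsub htail, add_pow, mul_sum]
  refine sum_congr rfl fun s hs => ?_
  have hs' : s < m - j + 1 := mem_range.mp hs
  have hexp : m - s = j + (m - j - s) := by lia
  rw [hexp, pow_add]
  ring

theorem R_lb_eq_iSup {N n m : ℕ} {D : Finset (Fin N)} (hD : #D = n) (hnm : n ≤ m)
    (q F : Fin N → ℝ) :
    R_lb m D q F = ⨆ π : Fin n ≃ {x // x ∈ D}, ∑ i, (1 - q (π i)) ^ (i.1 + 1) * F (π i) := by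
  subst hD
  refine iSup_congr fun π => ?_
  rw [sum_comm]
  refine sum_congr rfl fun i _ => ?_
  rw [← sum_mul, sum_range_choose_sub_mul_pow_mul_pow _ _ i.1.succ_pos (i.2.trans_le hnm),
    add_sub_cancel, one_pow, mul_one]

theorem iSup_fin_two_equiv {β R : Type*} [ConditionallyCompleteLattice R] (e : Fin 2 ≃ β)
    (g : (Fin 2 ≃ β) → R) : ⨆ π, g π = g e ⊔ g ((Equiv.swap 0 1).trans e) := by
  have hperm : ∀ σ : Equiv.Perm (Fin 2), σ = Equiv.refl _ ∨ σ = Equiv.swap 0 1 := by decide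
  have hrange : Set.range g = {g e, g ((Equiv.swap 0 1).trans e)} := by
    refine Set.Subset.antisymm ?_ (Set.pair_subset (Set.mem_range_self _) (Set.mem_range_self _))
    rintro _ ⟨π, rfl⟩
    obtain ⟨σ, rfl⟩ : ∃ σ : Equiv.Perm (Fin 2), σ.trans e = π :=
      ⟨π.trans e.symm, by simp [Equiv.trans_assoc]⟩
    rcases hperm σ with rfl | rfl <;> simp
  rw [iSup, hrange, csSup_pair]

section Pair

variable {ι : Type*} [DecidableEq ι] {a b : ι} (hab : a ≠ b)

/-- The enumeration of `{a, b}` listing `a` first, used to order two requested files; the list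
`[a, b]` supplies the underlying bijection. -/
def finTwoEquivPair : Fin 2 ≃ {x // x ∈ ({a, b} : Finset ι)} :=
  (List.Nodup.getEquiv [a, b] (by simpa using hab)).trans
    (Equiv.subtypeEquivRight fun _ => by simp)

theorem finTwoEquivPair_zero : (finTwoEquivPair hab 0 : ι) = a :=
  rfl

theorem finTwoEquivPair_one : (finTwoEquivPair hab 1 : ι) = b :=
  rfl

end Pair

theorem R_lb_pair {N m : ℕ} (hm : 2 ≤ m) {n₁ n₂ : Fin N} (hn : n₁ ≠ n₂) (q F : Fin N → ℝ) :
    R_lb m {n₁, n₂} q F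
      = max ((1 - q n₁) * F n₁ + (1 - q n₂) ^ 2 * F n₂)
        ((1 - q n₂) * F n₂ + (1 - q n₁) ^ 2 * F n₁) := by
  rw [R_lb_eq_iSup (card_pair hn) hm, iSup_fin_two_equiv (finTwoEquivPair hn)]
  simp [Fin.sum_univ_two, finTwoEquivPair_zero, finTwoEquivPair_one]

theorem two_users_distinct_files_rate_eq_general {α : Type*} [DecidableEq α] {N : ℕ} {u₁ u₂ : α}
    {d : α → Fin N} (hd : d u₁ ≠ d u₂) (q F : Fin N → ℝ) :
    R_MCCS {u₁, u₂} {u₁, u₂} d q F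
      = (1 - q (d u₁)) ^ 2 * F (d u₁) + (1 - q (d u₂)) ^ 2 * F (d u₂)
        + max (q (d u₁) * (1 - q (d u₁)) * F (d u₁)) (q (d u₂) * (1 - q (d u₂)) * F (d u₂)) ∧
    R_MCCS {u₁, u₂} {u₁, u₂} d q F = R_lb #{u₁, u₂} {d u₁, d u₂} q F := by
  have hu : u₁ ≠ u₂ := ne_of_apply_ne d hd
  refine ⟨R_MCCS_pair hu d q F, ?_⟩
  rw [R_MCCS_pair hu, card_pair hu, R_lb_pair le_rfl hd, ← max_add_add_left]
  congr 1 <;> ring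

/-- Two active users `A = {u₁, u₂}` requesting distinct files `n₁ ≠ n₂`, with leader
group `U = {u₁, u₂}`: the D-MCCS rate equals
`(1 − q_{n₁})² F_{n₁} + (1 − q_{n₂})² F_{n₂}
  + max{q_{n₁}(1 − q_{n₁})F_{n₁}, q_{n₂}(1 − q_{n₂})F_{n₂}}`,
and this quantity equals the lower-bound rate `R_lb({n₁, n₂}; q)`. -/
theorem two_users_distinct_files_rate_eq {α : Type*} [DecidableEq α] {N : ℕ}
    (u₁ u₂ : α) (hu : u₁ ≠ u₂) (n₁ n₂ : Fin N) (hn : n₁ ≠ n₂)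
    (q F : Fin N → ℝ) (hq1 : q n₁ ∈ Set.Icc (0 : ℝ) 1) (hq2 : q n₂ ∈ Set.Icc (0 : ℝ) 1)
    (hF1 : 0 ≤ F n₁) (hF2 : 0 ≤ F n₂)
    (d : α → Fin N) (hd1 : d u₁ = n₁) (hd2 : d u₂ = n₂) :
    R_MCCS {u₁, u₂} {u₁, u₂} d q F
      = (1 - q n₁) ^ 2 * F n₁ + (1 - q n₂) ^ 2 * F n₂
        + max (q n₁ * (1 - q n₁) * F n₁) (q n₂ * (1 - q n₂) * F n₂) ∧
    R_MCCS {u₁, u₂} {u₁, u₂} d q F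
      = R_lb ({u₁, u₂} : Finset α).card ({n₁, n₂} : Finset (Fin N)) q F := by
  subst hd1 hd2
  exact two_users_distinct_files_rate_eq_general hn q F
end

section
/- Suppose all files have the same size F ≥ 0 (F_n = F for all n) and the placement is symmetric with q_n = q ∈ [0,1] for all n. Then for every active set A, every demand map d on A, and every leader group U, the D-MCCS delivery rate has the closed form R_MCCS(d; q) = Σ_{s=0}^{|A|−1} Σ_{i=1}^{Ñ} C(|A| − i, s) · q^s (1 − q)^{|A|−s} F, where Ñ = |{d_k : k ∈ A}| is the number of distinct requested files. -/
/-!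
For equal file sizes and equal cache fractions the maximum over `S` depends only on `|S|`, so it
suffices to count the sets `S ⊆ A` of each size that meet `U`. Order the leaders as `u₁, …, u_Ñ`
and classify these sets by their first leader: those whose first leader is `uᵢ` are the sets
`{uᵢ} ∪ T` with `T ⊆ A \ {u₁, …, uᵢ}`, and `C(|A| - i, s)` of them have `|T| = s`.
-/

open Finset

section Counting

variable {α M : Type*} [AddCommMonoid M]

lemma sum_powerset_apply_card_eq_sum_range (B : Finset α) (g : ℕ → M) {n : ℕ} (hB : #B < n) :
    ∑ T ∈ B.powerset, g #T = ∑ s ∈ range n, (#B).choose s • g s := by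
  rw [sum_powerset_apply_card]
  refine sum_subset (range_subset_range.2 hB) fun s _ hs => ?_
  rw [Nat.choose_eq_zero_of_lt (by simpa using hs), zero_smul]

variable [DecidableEq α]

lemma powerset_filter_inter_insert_nonempty {A : Finset α} (U : Finset α) {u : α} (hu : u ∈ A) :
    {S ∈ A.powerset | (S ∩ insert u U).Nonempty}
      = {S ∈ A.powerset | (S ∩ U).Nonempty} ∪ (A \ insert u U).powerset.image (insert u) := by
  ext S
  simp only [mem_union, mem_filter, mem_image, mem_powerset]
  constructor
  · rintro ⟨hSA, hS⟩
    by_cases hSU : (S ∩ U).Nonempty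
    · exact .inl ⟨hSA, hSU⟩
    have huS : u ∈ S := by
      by_contra huS
      exact hSU (by rwa [inter_insert_of_notMem huS] at hS)
    have hdisj : Disjoint S U := by
      rwa [not_nonempty_iff_eq_empty, ← disjoint_iff_inter_eq_empty] at hSU
    refine .inr ⟨S.erase u, subset_sdiff.2 ⟨(erase_subset u S).trans hSA, ?_⟩, insert_erase huS⟩
    exact disjoint_insert_right.2 ⟨notMem_erase u S, hdisj.mono_left (erase_subset u S)⟩
  · rintro (⟨hSA, hSU⟩ | ⟨T, hT, rfl⟩)
    · exact ⟨hSA, hSU.mono (inter_subset_inter_left (subset_insert u U))⟩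
    · exact ⟨insert_subset hu (hT.trans sdiff_subset),
        u, mem_inter.2 ⟨mem_insert_self u T, mem_insert_self u U⟩⟩

lemma sum_powerset_filter_inter_insert_nonempty {A U : Finset α} {u : α} (huA : u ∈ A)
    (huU : u ∉ U) (f : Finset α → M) :
    ∑ S ∈ A.powerset with (S ∩ insert u U).Nonempty, f S
      = ∑ S ∈ A.powerset with (S ∩ U).Nonempty, f S
        + ∑ T ∈ (A \ insert u U).powerset, f (insert u T) := by
  have hdisj : Disjoint {S ∈ A.powerset | (S ∩ U).Nonempty}
      ((A \ insert u U).powerset.image (insert u)) := by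
    refine disjoint_left.2 fun S hS hS' => ?_
    obtain ⟨T, hT, rfl⟩ := mem_image.1 hS'
    have hTU : Disjoint T U :=
      (disjoint_insert_right.1 (subset_sdiff.1 (mem_powerset.1 hT)).2).2
    exact (mem_filter.1 hS).2.ne_empty
      (disjoint_iff_inter_eq_empty.1 (disjoint_insert_left.2 ⟨huU, hTU⟩))
  have hinj : Set.InjOn (insert u) ((A \ insert u U).powerset : Set (Finset α)) :=
    insert_erase_invOn.2.injOn.mono fun _ hT =>
      notMem_mono (mem_powerset.1 hT) fun hu => (mem_sdiff.1 hu).2 (mem_insert_self u U)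
  rw [powerset_filter_inter_insert_nonempty U huA, sum_union hdisj, sum_image hinj]

lemma sum_powerset_filter_inter_nonempty_apply_card {A U : Finset α} (hUA : U ⊆ A) (g : ℕ → M) :
    ∑ S ∈ A.powerset with (S ∩ U).Nonempty, g #S
      = ∑ i ∈ range #U, ∑ s ∈ range #A, (#A - (i + 1)).choose s • g (s + 1) := by
  induction U using Finset.induction_on with
  | empty => simp
  | insert u U huU ih =>
    obtain ⟨huA, hUA'⟩ := insert_subset_iff.1 hUA
    have hcard : #(A \ insert u U) = #A - (#U + 1) := by
      rw [card_sdiff_of_subset hUA, card_insert_of_notMem huU]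
    have hlt : #(A \ insert u U) < #A :=
      card_lt_card (sdiff_ssubset hUA (insert_nonempty u U))
    have hfirst : ∑ T ∈ (A \ insert u U).powerset, g #(insert u T)
        = ∑ s ∈ range #A, (#A - (#U + 1)).choose s • g (s + 1) := by
      rw [← hcard, ← sum_powerset_apply_card_eq_sum_range _ (fun s => g (s + 1)) hlt]
      refine sum_congr rfl fun T hT => ?_
      rw [card_insert_of_notMem fun huT =>
        (mem_sdiff.1 (mem_powerset.1 hT huT)).2 (mem_insert_self u U)]
    rw [sum_powerset_filter_inter_insert_nonempty huA huU fun S => g #S, ih hUA', hfirst,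
      card_insert_of_notMem huU, sum_range_succ]

end Counting

section Delivery

variable {α : Type*}

lemma maxOver_eq_of_forall_eq {S : Finset α} (hS : S.Nonempty) {f : α → ℝ} {x : ℝ}
    (hf : ∀ k ∈ S, f k = x) : maxOver S f = x := by
  rw [maxOver, dif_pos hS, sup'_congr hS rfl hf, sup'_const]

variable [DecidableEq α] {N : ℕ} {A U : Finset α} {d : α → Fin N}

lemma IsLeaderGroup.card_eq (hU : IsLeaderGroup A U d) : #U = #(A.image d) := by
  rw [← hU.2.2, card_image_of_injOn hU.2.1]

lemma R_MCCS_eq_sum_card {q F : Fin N → ℝ} {c Fc : ℝ} (U : Finset α)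
    (hq : ∀ n ∈ A.image d, q n = c) (hF : ∀ n ∈ A.image d, F n = Fc) :
    R_MCCS A U d q F = ∑ S ∈ A.powerset with (S ∩ U).Nonempty,
      c ^ (#S - 1) * (1 - c) ^ (#A - #S + 1) * Fc := by
  refine sum_congr rfl fun S hS => ?_
  obtain ⟨hSA, hSU⟩ := mem_filter.1 hS
  refine maxOver_eq_of_forall_eq (hSU.mono inter_subset_left) fun k hk => ?_
  have hdk : d k ∈ A.image d := mem_image_of_mem d (mem_powerset.1 hSA hk)
  rw [hq _ hdk, hF _ hdk]

theorem rate_closed_form_uniform_symmetric_general {q F : Fin N → ℝ} {c Fc : ℝ}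
    (hq : ∀ n ∈ A.image d, q n = c) (hF : ∀ n ∈ A.image d, F n = Fc)
    (hU : IsLeaderGroup A U d) :
    R_MCCS A U d q F
      = ∑ s ∈ range #A, ∑ i ∈ range #(A.image d),
          ((#A - (i + 1)).choose s : ℝ) * c ^ s * (1 - c) ^ (#A - s) * Fc := by
  rw [R_MCCS_eq_sum_card U hq hF, sum_powerset_filter_inter_nonempty_apply_card hU.1
    fun m => c ^ (m - 1) * (1 - c) ^ (#A - m + 1) * Fc, hU.card_eq, sum_comm]
  refine sum_congr rfl fun s hs => sum_congr rfl fun i _ => ?_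
  have hexp : #A - (s + 1) + 1 = #A - s := by
    have := mem_range.1 hs
    omega
  rw [nsmul_eq_mul, Nat.add_sub_cancel, hexp]
  ring

end Delivery

/-- Uniform file size `F_n = Fc ≥ 0` and symmetric placement `q_n = c ∈ [0,1]`:
for every active set `A`, demand map `d`, and leader group `U`, the D-MCCS rate has
the closed form
`Σ_{s=0}^{|A|−1} Σ_{i=1}^{Ñ} C(|A| − i, s) c^s (1 − c)^{|A|−s} Fc`, where
`Ñ = |{d_k : k ∈ A}|` is the number of distinct requested files. -/
theorem rate_closed_form_uniform_symmetric {α : Type*} [DecidableEq α] {N : ℕ}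
    (A U : Finset α) (d : α → Fin N) (q F : Fin N → ℝ) (c Fc : ℝ)
    (hc : c ∈ Set.Icc (0 : ℝ) 1) (hFc : 0 ≤ Fc)
    (hq : ∀ n, q n = c) (hF : ∀ n, F n = Fc) (hU : IsLeaderGroup A U d) :
    R_MCCS A U d q F
      = ∑ s ∈ Finset.range A.card, ∑ i ∈ Finset.range (A.image d).card,
          ((A.card - (i + 1)).choose s : ℝ) * c ^ s * (1 - c) ^ (A.card - s) * Fc :=
  rate_closed_form_uniform_symmetric_general (fun n _ => hq n) (fun n _ => hF n) hU
end

section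
/- Suppose all files have the same size F > 0 (F_n = F for all n), let N₁ ⊆ {1,…,N} be a nonempty set of cached files with |N₁| = N₁ᶜ files, let M be a cache size with 0 ≤ M ≤ N₁ᶜ · F, and consider the placement q_n = c := M / (N₁ᶜ F) for n ∈ N₁ and q_n = 0 otherwise. For an active set A with demand map d, let A₂ = {k ∈ A : d_k ∉ N₁}, Ñ = |{d_k : k ∈ A}|, and Ñ₂ = |{d_k : k ∈ A₂}|. Then for every leader group U, R_MCCS(d; q) = Σ_{s=0}^{|A|−1} ( Σ_{i=1}^{Ñ} C(|A| − i, s) − Σ_{i=1}^{Ñ₂} C(|A₂| − i, s) ) · c^s (1 − c)^{|A|−s} F + Ñ₂ · F. -/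
open Finset

/-!
For each member `k` of a group `S`, the piece of the file `d k` stored by exactly the other members
has a size determined by `|S|` and the cached fraction of `d k`. A piece of an uncached file is
nonzero only in a singleton group, so the maximum over `S` is the size for the fraction `c` as soon
as `S` contains a user of a cached file, and the size for the fraction `0` otherwise. Hence the rate
is a sum over all groups meeting `U` of a function of `|S|`, corrected on the groups inside `A₂`.
The groups of each size meeting `U` are counted by the hockey-stick identity, and a leader group of
`A` restricts to a leader group of `A₂`.
-/

section Counting

variable {α : Type*} [DecidableEq α]

lemma sum_range_choose_sub_add_choose {b v : ℕ} (hv : v ≤ b) (s : ℕ) :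
    ∑ i ∈ range v, (b - (i + 1)).choose s + (b - v).choose (s + 1) = b.choose (s + 1) := by
  induction v with
  | zero => simp
  | succ v ih =>
    have hsub : b - v = (b - (v + 1)) + 1 := by omega
    rw [← ih (by omega), hsub, Nat.choose_succ_succ, sum_range_succ, add_assoc]

lemma card_powersetCard_filter_inter_nonempty (B V : Finset α) (s : ℕ) :
    #{S ∈ B.powersetCard (s + 1) | (S ∩ V).Nonempty}
      = ∑ i ∈ range #(V ∩ B), (#B - (i + 1)).choose s := by
  have missing : {S ∈ B.powersetCard (s + 1) | ¬ (S ∩ V).Nonempty}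
      = (B \ V).powersetCard (s + 1) := by
    ext S
    simp only [mem_filter, mem_powersetCard, subset_sdiff, not_nonempty_iff_eq_empty,
      disjoint_iff_inter_eq_empty, and_right_comm]
  have total := card_filter_add_card_filter_not (s := B.powersetCard (s + 1))
    fun S => (S ∩ V).Nonempty
  rw [missing, card_powersetCard, card_powersetCard, card_sdiff] at total
  exact Nat.add_right_cancel <| total.trans
    (sum_range_choose_sub_add_choose (card_le_card inter_subset_right) s).symm

lemma sum_powerset_filter_inter_nonempty {M : Type*} [AddCommMonoid M] (B V : Finset α) {n : ℕ}
    (hn : #B ≤ n) (g : ℕ → M) :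
    ∑ S ∈ B.powerset with (S ∩ V).Nonempty, g (#S - 1)
      = ∑ s ∈ range n, (∑ i ∈ range #(V ∩ B), (#B - (i + 1)).choose s) • g s := by
  have card_pred_lt : ∀ S ∈ B.powerset.filter (fun S => (S ∩ V).Nonempty), #S - 1 ∈ range n := by
    intro S hS
    rw [mem_filter, mem_powerset] at hS
    have hpos := (hS.2.mono inter_subset_left).card_pos
    have hle := card_le_card hS.1
    rw [mem_range]
    omega
  rw [← sum_fiberwise_of_maps_to card_pred_lt]
  refine sum_congr rfl fun s _ => ?_
  have fiber : {S ∈ B.powerset.filter (fun S => (S ∩ V).Nonempty) | #S - 1 = s}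
      = {S ∈ B.powersetCard (s + 1) | (S ∩ V).Nonempty} := by
    ext S
    simp only [mem_filter, mem_powerset, mem_powersetCard, and_assoc, and_congr_right_iff]
    intro _
    rw [and_comm, and_congr_left_iff]
    intro hSV
    have hpos := (hSV.mono inter_subset_left).card_pos
    omega
  rw [← card_powersetCard_filter_inter_nonempty, ← fiber, ← sum_const]
  exact sum_congr rfl fun S hS => by rw [(mem_filter.1 hS).2]

lemma sum_powerset_filter_inter_nonempty_ite_subset {G : Type*} [AddCommGroup G]
    {A T : Finset α} (hT : T ⊆ A) (U : Finset α) (g h : ℕ → G) :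
    ∑ S ∈ A.powerset with (S ∩ U).Nonempty, (if S ⊆ T then h (#S - 1) else g (#S - 1))
      = ∑ s ∈ range #A, (∑ i ∈ range #(U ∩ A), (#A - (i + 1)).choose s) • g s
        + ∑ s ∈ range #A, (∑ i ∈ range #(U ∩ T), (#T - (i + 1)).choose s) • (h s - g s) := by
  have inside : (A.powerset.filter fun S => (S ∩ U).Nonempty).filter (· ⊆ T)
      = T.powerset.filter fun S => (S ∩ U).Nonempty := by
    ext S
    simp only [mem_filter, mem_powerset]
    exact ⟨fun hS => ⟨hS.2, hS.1.2⟩, fun hS => ⟨⟨hS.1.trans hT, hS.2⟩, hS.1⟩⟩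
  calc ∑ S ∈ A.powerset with (S ∩ U).Nonempty, (if S ⊆ T then h (#S - 1) else g (#S - 1))
      = ∑ S ∈ A.powerset with (S ∩ U).Nonempty,
          (g (#S - 1) + if S ⊆ T then h (#S - 1) - g (#S - 1) else 0) :=
        sum_congr rfl fun S _ => by split_ifs <;> simp
    _ = ∑ S ∈ A.powerset with (S ∩ U).Nonempty, g (#S - 1)
        + ∑ S ∈ T.powerset with (S ∩ U).Nonempty, (h (#S - 1) - g (#S - 1)) := by
      rw [sum_add_distrib, ← sum_filter, inside]
    _ = _ := by
      rw [sum_powerset_filter_inter_nonempty A U le_rfl g,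
        sum_powerset_filter_inter_nonempty T U (card_le_card hT) fun s => h s - g s]

end Counting

lemma maxOver_congr {α : Type*} {S : Finset α} {f g : α → ℝ} (h : ∀ k ∈ S, f k = g k) :
    maxOver S f = maxOver S g := by
  unfold maxOver
  split_ifs with hS
  · exact sup'_congr hS rfl h
  · rfl

lemma maxOver_eq_of_forall_le {α : Type*} {S : Finset α} {f : α → ℝ} {k : α} (hk : k ∈ S)
    (hmax : ∀ j ∈ S, f j ≤ f k) : maxOver S f = f k := by
  rw [maxOver, dif_pos ⟨k, hk⟩]
  exact le_antisymm (sup'_le _ _ hmax) (le_sup' f hk)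

/-- Under decentralized placement, the size of the part of a file of size `f` and cached fraction
`q` that is stored by one given set of `s` users, out of `n`, and by no other user. -/
def subfileSize (n : ℕ) (f q : ℝ) (s : ℕ) : ℝ :=
  q ^ s * (1 - q) ^ (n - s) * f

lemma subfileSize_nonneg {f q : ℝ} (hf : 0 ≤ f) (hq0 : 0 ≤ q) (hq1 : q ≤ 1) (n s : ℕ) :
    0 ≤ subfileSize n f q s :=
  mul_nonneg (mul_nonneg (pow_nonneg hq0 s) (pow_nonneg (sub_nonneg.2 hq1) _)) hf

lemma subfileSize_uncached (n : ℕ) (f : ℝ) (s : ℕ) :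
    subfileSize n f 0 s = if s = 0 then f else 0 := by
  simp [subfileSize, zero_pow_eq]

lemma sum_sum_choose_mul_subfileSize_uncached {n v : ℕ} (hv : v ≤ n) (b : ℕ) (f : ℝ) :
    ∑ s ∈ range n, (∑ i ∈ range v, ((b - (i + 1)).choose s : ℝ)) * subfileSize n f 0 s
      = v * f := by
  rcases n.eq_zero_or_pos with rfl | hn
  · simp [Nat.le_zero.1 hv]
  · simp [subfileSize_uncached, hn]

lemma maxOver_subfileSize_of_two_fractions {α : Type*} [DecidableEq α] {S T : Finset α}
    (hS : S.Nonempty) {c f : ℝ} (hf : 0 ≤ f) (hc0 : 0 ≤ c) (hc1 : c ≤ 1) (n : ℕ) :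
    maxOver S (fun k => subfileSize n f (if k ∈ T then 0 else c) (#S - 1))
      = if S ⊆ T then subfileSize n f 0 (#S - 1) else subfileSize n f c (#S - 1) := by
  split_ifs with hST
  · obtain ⟨k, hk⟩ := hS
    have uncached : ∀ j ∈ S, (if j ∈ T then 0 else c) = 0 := fun j hj => if_pos (hST hj)
    rw [maxOver_eq_of_forall_le hk fun j hj => by rw [uncached j hj, uncached k hk],
      uncached k hk]
  · obtain ⟨k, hk, hkT⟩ := not_subset.1 hST
    rw [maxOver_eq_of_forall_le hk, if_neg hkT]
    intro j hj
    rw [if_neg hkT]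
    split_ifs with hjT
    · have hcard : 1 < #S := one_lt_card.2 ⟨j, hj, k, hk, ne_of_mem_of_not_mem hjT hkT⟩
      rw [subfileSize_uncached, if_neg (Nat.sub_pos_of_lt hcard).ne']
      exact subfileSize_nonneg hf hc0 hc1 n _
    · exact le_rfl

section Rate

variable {α : Type*} [DecidableEq α] {N : ℕ}

lemma R_MCCS_eq_sum_maxOver_subfileSize (A U : Finset α) (d : α → Fin N) (q F : Fin N → ℝ) :
    R_MCCS A U d q F = ∑ S ∈ A.powerset with (S ∩ U).Nonempty,
      maxOver S (fun k => subfileSize #A (F (d k)) (q (d k)) (#S - 1)) := by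
  refine sum_congr rfl fun S hS => ?_
  rw [mem_filter, mem_powerset] at hS
  have hpos := (hS.2.mono inter_subset_left).card_pos
  have hle := card_le_card hS.1
  have exponent : #A - #S + 1 = #A - (#S - 1) := by omega
  simp only [subfileSize, exponent]

lemma R_MCCS_eq_of_two_fractions {A T : Finset α} (hT : T ⊆ A) (U : Finset α) {d : α → Fin N}
    {q F : Fin N → ℝ} {c f : ℝ} (hf : 0 ≤ f) (hc0 : 0 ≤ c) (hc1 : c ≤ 1)
    (hF : ∀ k ∈ A, F (d k) = f) (hq : ∀ k ∈ A, q (d k) = if k ∈ T then 0 else c) :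
    R_MCCS A U d q F
      = ∑ s ∈ range #A,
          (∑ i ∈ range #(U ∩ A), ((#A - (i + 1)).choose s : ℝ)
            - ∑ i ∈ range #(U ∩ T), ((#T - (i + 1)).choose s : ℝ)) * subfileSize #A f c s
        + #(U ∩ T) * f := by
  have group_value : ∀ S ∈ A.powerset.filter (fun S => (S ∩ U).Nonempty),
      maxOver S (fun k => subfileSize #A (F (d k)) (q (d k)) (#S - 1))
        = if S ⊆ T then subfileSize #A f 0 (#S - 1) else subfileSize #A f c (#S - 1) := by
    intro S hS
    rw [mem_filter, mem_powerset] at hS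
    rw [← maxOver_subfileSize_of_two_fractions (hS.2.mono inter_subset_left) hf hc0 hc1]
    exact maxOver_congr fun k hk => by rw [hF k (hS.1 hk), hq k (hS.1 hk)]
  have hcard : #(U ∩ T) ≤ #A := card_le_card (inter_subset_right.trans hT)
  rw [R_MCCS_eq_sum_maxOver_subfileSize, sum_congr rfl group_value,
    sum_powerset_filter_inter_nonempty_ite_subset hT,
    ← sum_sum_choose_mul_subfileSize_uncached hcard #T f, ← sum_add_distrib, ← sum_add_distrib]
  refine sum_congr rfl fun s _ => ?_
  simp only [nsmul_eq_mul, Nat.cast_sum]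
  ring

end Rate

namespace IsLeaderGroup

variable {α : Type*} [DecidableEq α] {N : ℕ} {A U : Finset α} {d : α → Fin N}

lemma card_image_eq_card_inter (hU : IsLeaderGroup A U d) : #(A.image d) = #(U ∩ A) := by
  rw [← hU.2.2, card_image_of_injOn hU.2.1, inter_eq_left.2 hU.1]

lemma filter (hU : IsLeaderGroup A U d) (p : Fin N → Prop) [DecidablePred p] :
    IsLeaderGroup (A.filter fun k => p (d k)) (U.filter fun k => p (d k)) d :=
  ⟨filter_subset_filter _ hU.1, hU.2.1.mono (filter_subset _ U),
    by rw [← filter_image, ← filter_image, hU.2.2]⟩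

lemma card_image_filter_eq_card_inter (hU : IsLeaderGroup A U d) (p : Fin N → Prop)
    [DecidablePred p] :
    #((A.filter fun k => p (d k)).image d) = #(U ∩ A.filter fun k => p (d k)) := by
  rw [(hU.filter p).card_image_eq_card_inter, ← filter_inter_distrib, inter_filter]

end IsLeaderGroup

/-- Two-file-group placement with uniform file size `F_n = Fc > 0`: files in the
nonempty group `N₁` are each cached in fraction `c = M / (|N₁| Fc)` and the remaining
files are uncached. With `A₂ = {k ∈ A : d_k ∉ N₁}`, `Ñ = |{d_k : k ∈ A}|`, and
`Ñ₂ = |{d_k : k ∈ A₂}|`, for every leader group `U` the D-MCCS rate equals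
`Σ_{s=0}^{|A|−1} (Σ_{i=1}^{Ñ} C(|A|−i, s) − Σ_{i=1}^{Ñ₂} C(|A₂|−i, s))
  c^s (1−c)^{|A|−s} Fc + Ñ₂ Fc`. -/
theorem rate_closed_form_two_groups_uniform_size {α : Type*} [DecidableEq α] {N : ℕ}
    (F : Fin N → ℝ) (Fc : ℝ) (hFc : 0 < Fc) (hF : ∀ n, F n = Fc)
    (N₁ : Finset (Fin N)) (hN₁ : N₁.Nonempty)
    (M : ℝ) (hM0 : 0 ≤ M) (hM1 : M ≤ N₁.card * Fc)
    (c : ℝ) (hc : c = M / (N₁.card * Fc))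
    (q : Fin N → ℝ) (hq : ∀ n, q n = if n ∈ N₁ then c else 0)
    (A U : Finset α) (d : α → Fin N) (hU : IsLeaderGroup A U d)
    (A₂ : Finset α) (hA₂ : A₂ = A.filter (fun k => d k ∉ N₁)) :
    R_MCCS A U d q F
      = (∑ s ∈ Finset.range A.card,
          ((∑ i ∈ Finset.range (A.image d).card, ((A.card - (i + 1)).choose s : ℝ))
            - ∑ i ∈ Finset.range (A₂.image d).card, ((A₂.card - (i + 1)).choose s : ℝ))
            * c ^ s * (1 - c) ^ (A.card - s) * Fc)
        + (A₂.image d).card * Fc := by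
  have hsize : 0 ≤ (#N₁ : ℝ) * Fc := by positivity
  have hc0 : 0 ≤ c := hc ▸ div_nonneg hM0 hsize
  have hc1 : c ≤ 1 := hc ▸ div_le_one_of_le₀ hM1 hsize
  have hT : A₂ ⊆ A := hA₂ ▸ filter_subset _ _
  have hqA : ∀ k ∈ A, q (d k) = if k ∈ A₂ then 0 else c := by
    intro k hk
    simp [hq, hA₂, hk]
  have hfiles₂ : #(A₂.image d) = #(U ∩ A₂) :=
    hA₂ ▸ hU.card_image_filter_eq_card_inter (· ∉ N₁)
  rw [R_MCCS_eq_of_two_fractions hT U hFc.le hc0 hc1 (fun k _ => hF (d k)) hqA,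
    hU.card_image_eq_card_inter, hfiles₂]
  simp only [subfileSize, mul_assoc]
end

section
/- Let A be a finite set and U, B ⊆ A subsets, with m = |U| and m₂ = |U ∩ B|. For every natural number s, the number of subsets S ⊆ A with |S| = s + 1, S ∩ U ≠ ∅, and S ⊄ B equals Σ_{i=1}^{m} C(|A| − i, s) − Σ_{i=1}^{m₂} C(|B| − i, s). -/
/-!
An `n`-subset of `X` misses `V` exactly when it is an `n`-subset of `X \ V`, so
`C(|X|, n) - C(|X \ V|, n)` of them meet `V`; for `n = s + 1` Pascal's rule telescopes this
difference into `∑_{i=1}^{|V ∩ X|} C(|X| - i, s)`. The subsets of `A` to be counted are those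
meeting `U`, minus those of `B ⊆ A` meeting `U`. The latter family is part of the former, so the
subtraction of natural numbers does not truncate.
-/

open Finset

theorem sum_Icc_choose_sub_add_choose {n k : ℕ} (hk : k ≤ n) (s : ℕ) :
    ∑ i ∈ Icc 1 k, (n - i).choose s + (n - k).choose (s + 1) = n.choose (s + 1) := by
  induction k with
  | zero => simp
  | succ k ih =>
    have pascal : (n - k).choose (s + 1)
        = (n - (k + 1)).choose s + (n - (k + 1)).choose (s + 1) := by
      rw [show n - k = n - (k + 1) + 1 by lia, Nat.choose_succ_succ']
    rw [sum_Icc_succ_top (Nat.le_add_left 1 k), add_assoc, ← pascal]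
    exact ih (Nat.le_of_succ_le hk)

section powersetCardMeeting

variable {α : Type*} [DecidableEq α]

/-- The family of `n`-element subsets of `X` that meet `V`, where `V` need not lie in `X`.
With `V` the leader group, these are the non-redundant groups of size `n` in `X`. -/
def powersetCardMeeting (n : ℕ) (V X : Finset α) : Finset (Finset α) :=
  {S ∈ X.powersetCard n | (S ∩ V).Nonempty}

theorem mem_powersetCardMeeting {n : ℕ} {V X S : Finset α} :
    S ∈ powersetCardMeeting n V X ↔ S ⊆ X ∧ #S = n ∧ (S ∩ V).Nonempty := by
  rw [powersetCardMeeting, mem_filter, mem_powersetCard, and_assoc]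

theorem powersetCardMeeting_mono (n : ℕ) (V : Finset α) {X Y : Finset α} (h : X ⊆ Y) :
    powersetCardMeeting n V X ⊆ powersetCardMeeting n V Y :=
  filter_subset_filter _ (powersetCard_mono h)

theorem powersetCardMeeting_eq_sdiff (n : ℕ) (V X : Finset α) :
    powersetCardMeeting n V X = X.powersetCard n \ (X \ V).powersetCard n := by
  ext S
  simp only [mem_powersetCardMeeting, mem_sdiff, mem_powersetCard, subset_sdiff,
    ← not_disjoint_iff_nonempty_inter]
  tauto

theorem card_powersetCardMeeting (n : ℕ) (V X : Finset α) :
    #(powersetCardMeeting n V X) = (#X).choose n - (#(X \ V)).choose n := by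
  rw [powersetCardMeeting_eq_sdiff, card_sdiff_of_subset (powersetCard_mono sdiff_subset),
    card_powersetCard, card_powersetCard]

theorem card_powersetCardMeeting_succ (s : ℕ) (V X : Finset α) :
    #(powersetCardMeeting (s + 1) V X) = ∑ i ∈ Icc 1 #(V ∩ X), (#X - i).choose s := by
  rw [card_powersetCardMeeting, card_sdiff,
    ← sum_Icc_choose_sub_add_choose (card_le_card (inter_subset_right : V ∩ X ⊆ X)),
    Nat.add_sub_cancel]

theorem filter_powerset_meeting_not_subset_eq_sdiff (n : ℕ) (U A B : Finset α) :
    A.powerset.filter (fun S => #S = n ∧ (S ∩ U).Nonempty ∧ ¬ S ⊆ B)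
      = powersetCardMeeting n U A \ powersetCardMeeting n U B := by
  ext S
  simp only [mem_filter, mem_powerset, mem_sdiff, mem_powersetCardMeeting]
  tauto

end powersetCardMeeting

/-- Let `A` be a finite set and `U, B ⊆ A`, with `m = |U|` and `m₂ = |U ∩ B|`. For every
natural number `s`, the number of subsets `S ⊆ A` with `|S| = s + 1`, `S ∩ U ≠ ∅`, and
`S ⊄ B` equals `Σ_{i=1}^{m} C(|A| − i, s) − Σ_{i=1}^{m₂} C(|B| − i, s)`. -/
theorem card_subsets_meeting_not_subset_eq_sum_sub_sum {α : Type*} [DecidableEq α]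
    (A U B : Finset α) (hU : U ⊆ A) (hB : B ⊆ A) (m m₂ : ℕ)
    (hm : U.card = m) (hm₂ : (U ∩ B).card = m₂) (s : ℕ) :
    (A.powerset.filter (fun S => S.card = s + 1 ∧ (S ∩ U).Nonempty ∧ ¬ S ⊆ B)).card
      = ∑ i ∈ Finset.Icc 1 m, (A.card - i).choose s
        - ∑ i ∈ Finset.Icc 1 m₂, (B.card - i).choose s := by
  subst hm hm₂
  rw [filter_powerset_meeting_not_subset_eq_sdiff,
    card_sdiff_of_subset (powersetCardMeeting_mono (s + 1) U hB),
    card_powersetCardMeeting_succ, card_powersetCardMeeting_succ, inter_eq_left.mpr hU]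
end
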